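/- arXiv:2409.01772 — 3 statements merged into one kernel-verified Lean document; each statement's English description precedes it below -/
import Mathlib

section
/- Let X be a metric space, E ⊆ X a non-empty subset, f : E → ℝ a bounded Lipschitz function, and ε > 0. Then there exists a Lipschitz extension f̄ : X → ℝ of f such that Lip(f̄) ≤ Lip(f) + ε, lip_a(f̄)(x) = lip_a(f)(x) for every x ∈ E, and inf_E f ≤ f̄(y) ≤ sup_E f for every y ∈ X. -/
open Metric Set Filter ENNReal MeasureTheory

/-- `lipOn f E` is the Lipschitz constant (valued in `ℝ≥0∞`) of `f : X → ℝ` restricted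
to the set `E ⊆ X`, namely `Lip(f; E)`. -/
noncomputable def lipOn {X : Type*} [MetricSpace X] (f : X → ℝ) (E : Set X) : ℝ≥0∞ :=
  ⨆ (x : E) (y : E), edist (f x) (f y) / edist (x : X) (y : X)

/-- `asympSlope f x` is the asymptotic slope `lip_a(f)(x) = inf_{r>0} Lip(f; B_r(x))`. -/
noncomputable def asympSlope {X : Type*} [MetricSpace X] (f : X → ℝ) (x : X) : ℝ≥0∞ :=
  ⨅ (r : ℝ) (_ : 0 < r), lipOn f (Metric.ball x r)

/-- `asympSlopeOn f E x` is the asymptotic slope of `f` at `x ∈ E` computed within `E`,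
i.e. `inf_{r>0} Lip(f; B_r(x) ∩ E)`. -/
noncomputable def asympSlopeOn {X : Type*} [MetricSpace X] (f : X → ℝ) (E : Set X) (x : X) :
    ℝ≥0∞ :=
  ⨅ (r : ℝ) (_ : 0 < r), lipOn f (Metric.ball x r ∩ E)

lemma lipOn_mono' {X : Type*} [MetricSpace X] (f : X → ℝ) {S T : Set X} (h : S ⊆ T) :
    lipOn f S ≤ lipOn f T := by
  unfold lipOn
  refine iSup_le fun x => iSup_le fun y => ?_
  exact le_iSup_of_le ⟨x, h x.2⟩ (le_iSup_of_le ⟨y, h y.2⟩ le_rfl)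

lemma lipOn_congr' {X : Type*} [MetricSpace X] (f g : X → ℝ) {S : Set X}
    (h : ∀ x ∈ S, f x = g x) : lipOn f S = lipOn g S := by
  unfold lipOn
  refine iSup_congr fun x => iSup_congr fun y => ?_
  rw [h x x.2, h y y.2]

lemma lipOn_le' {X : Type*} [MetricSpace X] (f : X → ℝ) {S : Set X} {M : ℝ} (hM : 0 ≤ M)
    (h : ∀ x ∈ S, ∀ y ∈ S, f x ≤ f y + M * dist x y) : lipOn f S ≤ ENNReal.ofReal M := by
  unfold lipOn
  refine iSup_le fun x => iSup_le fun y => ?_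
  refine ENNReal.div_le_of_le_mul ?_
  rw [edist_dist, edist_dist, ← ENNReal.ofReal_mul hM]
  apply ENNReal.ofReal_le_ofReal
  rw [Real.dist_eq, abs_le]
  have h1 := h x x.2 y y.2
  have h2 := h y y.2 x x.2
  rw [dist_comm] at h2
  constructor <;> linarith

lemma le_of_lipOn' {X : Type*} [MetricSpace X] (f : X → ℝ) {S : Set X} (hS : lipOn f S ≠ ⊤)
    {x y : X} (hx : x ∈ S) (hy : y ∈ S) : f x ≤ f y + (lipOn f S).toReal * dist x y := by
  by_cases hxy : x = y
  · subst hxy; simp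
  have h1 : edist (f x) (f y) / edist x y ≤ lipOn f S := by
    unfold lipOn
    exact le_iSup_of_le ⟨x, hx⟩ (le_iSup_of_le ⟨y, hy⟩ le_rfl)
  have hd : 0 < dist x y := dist_pos.2 hxy
  rw [edist_dist, edist_dist, ← ENNReal.ofReal_div_of_pos hd] at h1
  have h2 := (ENNReal.ofReal_le_iff_le_toReal hS).1 h1
  rw [div_le_iff₀ hd, Real.dist_eq] at h2
  linarith [le_abs_self (f x - f y)]

/-- convex modulus. -/
noncomputable def phiAux (A : ℝ → ℝ) (ε K t : ℝ) : ℝ :=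
  ⨆ r : Ioi (0 : ℝ), (A r + min (r : ℝ) ε) * max (t - min (r : ℝ) ε * r / (4 * K)) 0

section
variable {A : ℝ → ℝ} {ε K L : ℝ} (hε : 0 < ε) (hK : K = L + ε) (hA0 : ∀ r, 0 ≤ A r)
  (hAL : ∀ r, A r ≤ L)
include hε hK hA0 hAL

lemma phiAux_bdd (t : ℝ) : BddAbove (range fun r : Ioi (0 : ℝ) =>
    (A r + min (r : ℝ) ε) * max (t - min (r : ℝ) ε * r / (4 * K)) 0) := by
  refine ⟨K * max t 0, ?_⟩
  rintro _ ⟨⟨r, hr⟩, rfl⟩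
  have hr : 0 < r := hr
  have h0 := hA0 r
  have hL := hAL r
  have hKp : 0 < K := by linarith
  have hm : 0 < min r ε := lt_min hr hε
  have hc : 0 ≤ min r ε * r / (4 * K) := by positivity
  have := min_le_right r ε
  dsimp only
  apply mul_le_mul _ _ (le_max_right _ _) hKp.le
  · linarith
  · exact max_le_max (by linarith) le_rfl

lemma le_phiAux (t : ℝ) {r : ℝ} (hr : 0 < r) :
    (A r + min r ε) * max (t - min r ε * r / (4 * K)) 0 ≤ phiAux A ε K t :=
  le_ciSup (phiAux_bdd hε hK hA0 hAL t) (⟨r, hr⟩ : Ioi (0 : ℝ))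

lemma phiAux_nonneg (t : ℝ) : 0 ≤ phiAux A ε K t := by
  refine le_trans ?_ (le_phiAux hε hK hA0 hAL t one_pos)
  have := hA0 1
  have hm : 0 < min 1 ε := lt_min one_pos hε
  positivity

lemma phiAux_zero : phiAux A ε K 0 = 0 := by
  apply le_antisymm _ (phiAux_nonneg hε hK hA0 hAL 0)
  have : Nonempty (Ioi (0 : ℝ)) := ⟨⟨1, mem_Ioi.2 one_pos⟩⟩
  apply ciSup_le
  rintro ⟨r, hr⟩
  have hr : 0 < r := hr
  have hKp : 0 < K := by linarith [hA0 r, hAL r]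
  have hm : 0 < min r ε := lt_min hr hε
  have hc : 0 ≤ min r ε * r / (4 * K) := by positivity
  dsimp only
  rw [max_eq_right (by linarith), mul_zero]

lemma phiAux_lip {M s t : ℝ} (hM0 : 0 ≤ M)
    (hM : ∀ r, 0 < r → min r ε * r / (4 * K) < s → A r + min r ε ≤ M) :
    phiAux A ε K s ≤ phiAux A ε K t + M * |s - t| := by
  have : Nonempty (Ioi (0 : ℝ)) := ⟨⟨1, mem_Ioi.2 one_pos⟩⟩
  apply ciSup_le
  rintro ⟨r, hr⟩
  have hr : 0 < r := hr
  have h0 := hA0 r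
  have hm : 0 < min r ε := lt_min hr hε
  dsimp only
  have h1 := le_phiAux hε hK hA0 hAL t hr
  set c := min r ε * r / (4 * K)
  by_cases hc : c < s
  · have h2 := hM r hr hc
    have h3 : max (s - c) 0 ≤ max (t - c) 0 + |s - t| := by
      have := le_abs_self (s - t)
      have := le_max_left (t - c) 0
      have := le_max_right (t - c) 0
      apply max_le
      · linarith
      · positivity
    calc _ ≤ (A r + min r ε) * (max (t - c) 0 + |s - t|) := by gcongr
      _ = (A r + min r ε) * max (t - c) 0 + (A r + min r ε) * |s - t| := by ring
      _ ≤ _ := by gcongr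
  · rw [max_eq_right (by linarith), mul_zero]
    have := phiAux_nonneg hε hK hA0 hAL t
    positivity

lemma phiAux_lip_global (s t : ℝ) :
    phiAux A ε K s ≤ phiAux A ε K t + K * |s - t| := by
  apply phiAux_lip hε hK hA0 hAL
  · linarith [hA0 0, hAL 0]
  · intro r _ _
    linarith [hAL r, min_le_right r ε]

lemma phiAux_ge {t : ℝ} (ht : 0 < t) :
    A (2 * t) * t + min (2 * t) ε * t / 2 ≤ phiAux A ε K t := by
  refine le_trans ?_ (le_phiAux hε hK hA0 hAL t (r := 2 * t) (by positivity))
  have h0 := hA0 (2 * t)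
  have hL := hAL (2 * t)
  have hKp : 0 < K := by linarith
  have hm : 0 < min (2 * t) ε := lt_min (by positivity) hε
  have hm2 := min_le_right (2 * t) ε
  set a := A (2 * t)
  set η := min (2 * t) ε
  have h1 : (a + η) * (η * (2 * t) / (4 * K)) ≤ η * t / 2 := by
    calc _ ≤ K * (η * (2 * t) / (4 * K)) := by gcongr; linarith
      _ = _ := by field_simp; ring
  calc a * t + η * t / 2 ≤ (a + η) * (t - η * (2 * t) / (4 * K)) := by nlinarith
    _ ≤ _ := by gcongr; exact le_max_left _ _

end

/-- **Di Marino–Gigli–Pratelli extension theorem, bounded version.** A bounded Lipschitz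
function on a non-empty set `E ⊆ X` admits a Lipschitz extension with Lipschitz constant
increased at most by `ε`, preserving the asymptotic slopes on `E`, and with values between
`inf_E f` and `sup_E f`. -/
theorem lipschitz_extension_asympSlope_bounded {X : Type*} [MetricSpace X] (E : Set X)
    (hE : E.Nonempty) (f : X → ℝ) (hf : ∃ K, LipschitzOnWith K f E)
    (hbdd : ∃ C, ∀ x ∈ E, |f x| ≤ C) (ε : ℝ) (hε : 0 < ε) :
    ∃ g : X → ℝ, (∃ K, LipschitzWith K g) ∧ (∀ x ∈ E, g x = f x) ∧
      lipOn g Set.univ ≤ lipOn f E + ENNReal.ofReal ε ∧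
      (∀ x ∈ E, asympSlope g x = asympSlopeOn f E x) ∧
      ∀ y : X, sInf (f '' E) ≤ g y ∧ g y ≤ sSup (f '' E) := by
  obtain ⟨K₀, hK₀⟩ := hf
  obtain ⟨C, hC⟩ := hbdd
  have hfin : lipOn f E ≠ ⊤ := by
    refine ne_top_of_le_ne_top (ENNReal.ofReal_ne_top (r := K₀)) (lipOn_le' f K₀.2 ?_)
    intro x hx y hy
    have := hK₀.dist_le_mul x hx y hy
    rw [Real.dist_eq] at this
    have h3 := le_abs_self (f x - f y)
    change f x ≤ f y + (K₀ : ℝ) * dist x y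
    linarith
  obtain ⟨L, hL⟩ : ∃ L, L = (lipOn f E).toReal := ⟨_, rfl⟩
  obtain ⟨K, hK⟩ : ∃ K, K = L + ε := ⟨_, rfl⟩
  have hL0 : 0 ≤ L := hL ▸ ENNReal.toReal_nonneg
  have hKp : 0 < K := by linarith
  obtain ⟨A, hA⟩ : ∃ A : X → ℝ → ℝ, A = fun y r => (lipOn f (ball y r ∩ E)).toReal := ⟨_, rfl⟩
  have hfin' : ∀ y r, lipOn f (ball y r ∩ E) ≠ ⊤ := fun y r =>
    ne_top_of_le_ne_top hfin (lipOn_mono' f inter_subset_right)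
  have hA0 : ∀ y r, 0 ≤ A y r := fun y r => hA ▸ ENNReal.toReal_nonneg
  have hAL : ∀ y r, A y r ≤ L := fun y r => by
    rw [hA, hL]; exact ENNReal.toReal_mono hfin (lipOn_mono' f inter_subset_right)
  obtain ⟨F, hF⟩ : ∃ F : X → X → ℝ, F = fun y z => f y + phiAux (A y) ε K (dist z y) := ⟨_, rfl⟩
  have hFC : ∀ y ∈ E, ∀ z, -C ≤ F y z := fun y hy z => by
    have := phiAux_nonneg hε hK (hA0 y) (hAL y) (dist z y)
    have := (abs_le.1 (hC y hy)).1
    rw [hF]; dsimp only; linarith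
  have hFK : ∀ y z z', F y z ≤ F y z' + K * dist z z' := fun y z z' => by
    have h1 := phiAux_lip_global hε hK (hA0 y) (hAL y) (dist z y) (dist z' y)
    have h2 : K * |dist z y - dist z' y| ≤ K * dist z z' := by
      gcongr; exact abs_dist_sub_le z z' y
    rw [hF]; dsimp only; linarith
  have hFx : ∀ x, F x x = f x := fun x => by
    rw [hF]; dsimp only; rw [dist_self, phiAux_zero hε hK (hA0 x) (hAL x), add_zero]
  have hFge : ∀ x ∈ E, ∀ y ∈ E, x ≠ y →
      f x + min (2 * dist x y) ε * dist x y / 2 ≤ F y x := fun x hx y hy hxy => by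
    have ht : 0 < dist x y := dist_pos.2 hxy
    have h1 := phiAux_ge hε hK (hA0 y) (hAL y) ht
    have h2 := le_of_lipOn' f (hfin' y (2 * dist x y)) (x := x) (y := y)
      ⟨by rw [mem_ball]; linarith, hx⟩ ⟨mem_ball_self (by linarith), hy⟩
    have h3 : A y (2 * dist x y) = (lipOn f (ball y (2 * dist x y) ∩ E)).toReal := by rw [hA]
    rw [← h3] at h2
    rw [hF]; dsimp only; linarith
  have hEn : Nonempty E := hE.to_subtype
  obtain ⟨g, hg⟩ : ∃ g : X → ℝ, g = fun z => ⨅ y : E, F y z := ⟨_, rfl⟩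
  have hgle : ∀ y ∈ E, ∀ z, g z ≤ F y z := fun y hy z => by
    rw [hg]
    exact ciInf_le (f := fun y : E => F y z)
      ⟨-C, by rintro _ ⟨y, rfl⟩; exact hFC y y.2 z⟩ ⟨y, hy⟩
  have hleg : ∀ z a, (∀ y ∈ E, a ≤ F y z) → a ≤ g z := fun z a h => by
    rw [hg]; exact le_ciInf fun y => h y y.2
  have hgE : ∀ x ∈ E, g x = f x := fun x hx => by
    apply le_antisymm
    · rw [← hFx x]; exact hgle x hx x
    · apply hleg
      intro y hy
      by_cases hxy : x = y
      · rw [← hxy, hFx]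
      · refine le_trans ?_ (hFge x hx y hy hxy)
        have : 0 ≤ min (2 * dist x y) ε := le_min (by positivity) hε.le
        have : 0 ≤ min (2 * dist x y) ε * dist x y / 2 := by positivity
        linarith
  have hgK : ∀ z z', g z ≤ g z' + K * dist z z' := fun z z' => by
    have := hleg z' (g z - K * dist z z') fun y hy => by
      linarith [hgle y hy z, hFK y z z']
    linarith
  have hgloc : ∀ x ∈ E, ∀ R > 0, ∃ σ > 0, ∀ z ∈ ball x σ, ∀ z' ∈ ball x σ,
      g z ≤ g z' + (A x R + R) * dist z z' := fun x hx R hR => by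
    have hcR : 0 < min (R / 2) ε * (R / 2) / (4 * K) := by
      have : 0 < min (R / 2) ε := lt_min (by positivity) hε
      positivity
    set cR := min (R / 2) ε * (R / 2) / (4 * K) with hcRdef
    obtain ⟨τ, hτ0, hτ1, hτ2⟩ : ∃ τ, 0 < τ ∧ 2 * τ ≤ cR ∧ τ ≤ R / 2 :=
      ⟨min (cR / 2) (R / 2), lt_min (by positivity) (by positivity),
        by linarith [min_le_left (cR / 2) (R / 2)], min_le_right _ _⟩
    have hητ : 0 < min (2 * τ) ε := lt_min (by positivity) hε
    obtain ⟨σ, hσ0, hσ1, hσ2⟩ : ∃ σ, 0 < σ ∧ σ ≤ τ ∧ 2 * K * σ ≤ min (2 * τ) ε * τ / 2 := by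
      refine ⟨min τ (min (2 * τ) ε * τ / 2 / (2 * K)), lt_min hτ0 (by positivity),
        min_le_left _ _, ?_⟩
      calc _ ≤ 2 * K * (min (2 * τ) ε * τ / 2 / (2 * K)) := by gcongr; exact min_le_right _ _
        _ = _ := by field_simp
    have hM0 : 0 ≤ A x R + R := by linarith [hA0 x R]
    have near : ∀ y, dist y x < τ → ∀ z ∈ ball x σ, ∀ z' ∈ ball x σ,
        F y z ≤ F y z' + (A x R + R) * dist z z' := by
      intro y hy z hz z' hz'
      rw [mem_ball] at hz hz'
      have hzy : dist z y < 2 * τ := by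
        linarith [dist_triangle z x y, dist_comm x y]
      have h1 := phiAux_lip hε hK (hA0 y) (hAL y) (s := dist z y) (t := dist z' y) hM0 (by
        intro r hr hrc
        have hrR : r < R / 2 := by
          by_contra hcon
          push Not at hcon
          have : cR ≤ min r ε * r / (4 * K) := by
            rw [hcRdef]; gcongr
          linarith
        have h2 : A y r ≤ A x R := by
          rw [hA]
          refine ENNReal.toReal_mono (hfin' x R) (lipOn_mono' f ?_)
          refine inter_subset_inter_left _ (ball_subset_ball' ?_)
          linarith
        linarith [min_le_left r ε])
      have h2 : (A x R + R) * |dist z y - dist z' y| ≤ (A x R + R) * dist z z' := by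
        gcongr; exact abs_dist_sub_le z z' y
      rw [hF]; dsimp only; linarith
    refine ⟨σ, hσ0, fun z hz z' hz' => ?_⟩
    have key : g z - (A x R + R) * dist z z' ≤ g z' := by
      apply hleg
      intro y hy
      by_cases hyx : dist y x < τ
      · linarith [hgle y hy z, near y hyx z hz z' hz']
      · push Not at hyx
        have h1 := hgle x hx z
        have h2 := near x (by rw [dist_self]; exact hτ0) z hz z' hz'
        have h3 : F x z' ≤ F y z' := by
          have hne : x ≠ y := by
            rintro rfl; rw [dist_self] at hyx; linarith
          have h4 := hFge x hx y hy hne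
          have h5 := hFK x z' x
          have h6 := hFK y x z'
          rw [hFx] at h5
          rw [dist_comm x z'] at h6
          rw [mem_ball] at hz'
          have h7 : K * dist z' x ≤ K * σ := by gcongr
          rw [dist_comm] at hyx
          have h8 : min (2 * τ) ε * τ / 2 ≤ min (2 * dist x y) ε * dist x y / 2 := by
            gcongr
          linarith
        linarith
    linarith
  have hba : BddAbove (f '' E) := ⟨C, by
    rintro _ ⟨y, hy, rfl⟩; exact (abs_le.1 (hC y hy)).2⟩
  have hbb : BddBelow (f '' E) := ⟨-C, by
    rintro _ ⟨y, hy, rfl⟩; exact (abs_le.1 (hC y hy)).1⟩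
  set m := sInf (f '' E)
  set S := sSup (f '' E)
  have hmf : ∀ x ∈ E, m ≤ f x := fun x hx => csInf_le hbb ⟨x, hx, rfl⟩
  have hfS : ∀ x ∈ E, f x ≤ S := fun x hx => le_csSup hba ⟨x, hx, rfl⟩
  have hmS : m ≤ S := by
    obtain ⟨x, hx⟩ := hE
    exact (hmf x hx).trans (hfS x hx)
  have hclamp : ∀ a b d : ℝ, 0 ≤ d → a ≤ b + d → max m (min a S) ≤ max m (min b S) + d := by
    intro a b d hd hab
    rw [← max_add_add_right, ← min_add_add_right]
    exact max_le_max (by linarith) (min_le_min hab (by linarith))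
  have hhE : ∀ x ∈ E, max m (min (g x) S) = f x := fun x hx => by
    rw [hgE x hx, min_eq_left (hfS x hx), max_eq_right (hmf x hx)]
  refine ⟨fun z => max m (min (g z) S), ⟨K.toNNReal, ?_⟩, hhE, ?_, ?_, ?_⟩
  · apply LipschitzWith.of_le_add_mul
    intro z z'
    rw [Real.coe_toNNReal _ hKp.le]
    exact hclamp _ _ _ (by positivity) (hgK z z')
  · have h1 : lipOn f E + ENNReal.ofReal ε = ENNReal.ofReal K := by
      rw [hK, ENNReal.ofReal_add hL0 hε.le, hL, ENNReal.ofReal_toReal hfin]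
    rw [h1]
    exact lipOn_le' _ hKp.le fun z _ z' _ => hclamp _ _ _ (by positivity) (hgK z z')
  · intro x hx
    apply le_antisymm
    · unfold asympSlopeOn
      refine le_iInf₂ fun r hr => ?_
      apply ENNReal.le_of_forall_pos_le_add
      intro δ hδ _
      have hδ' : (0 : ℝ) < δ := hδ
      have hR : 0 < min r (δ : ℝ) := lt_min hr hδ'
      obtain ⟨σ, hσ, h⟩ := hgloc x hx _ hR
      have hM0 : 0 ≤ A x (min r (δ : ℝ)) + min r (δ : ℝ) := by linarith [hA0 x (min r (δ : ℝ))]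
      unfold asympSlope
      refine (iInf₂_le σ hσ).trans ((lipOn_le' _ hM0 fun z hz z' hz' =>
        hclamp _ _ _ (by positivity) (h z hz z' hz')).trans ?_)
      rw [ENNReal.ofReal_add (hA0 _ _) hR.le]
      apply add_le_add
      · rw [hA]
        dsimp only
        rw [ENNReal.ofReal_toReal (hfin' _ _)]
        exact lipOn_mono' f (inter_subset_inter_left _ (ball_subset_ball (min_le_left _ _)))
      · refine (ENNReal.ofReal_le_ofReal (min_le_right _ _)).trans ?_
        rw [ENNReal.ofReal_coe_nnreal]
    · unfold asympSlope asympSlopeOn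
      refine iInf₂_mono fun r hr => ?_
      rw [← lipOn_congr' (fun z => max m (min (g z) S)) f fun z hz => hhE z hz.2]
      exact lipOn_mono' _ inter_subset_left
  · intro y
    exact ⟨le_max_left _ _, max_le hmS (min_le_right _ _)⟩
end

section
/- Let B be a real Banach space, E ⊆ B a σ-compact set, f : B → ℝ a bounded Lipschitz function, and ε > 0. Then there exists a sequence (f_n) of smooth cylindrical functions f_n : B → ℝ such that: (i) inf_B f ≤ f_n(x) ≤ sup_B f for all x ∈ B and Lip(f_n) ≤ Lip(f) + ε for every n; (ii) f_n(x) → f(x) as n → ∞ for every x ∈ E; (iii) limsup_n ‖d_x f_n‖_{B*} ≤ lip_a(f)(x) for every x ∈ E, where d_x f_n ∈ B* denotes the Fréchet differential of f_n at x. -/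
open Metric Set Filter ENNReal MeasureTheory

/-- A smooth cylindrical function on a Banach space `B`: a function of the form `g ∘ p`
where `p : B → V` is a bounded linear operator into a finite-dimensional normed space `V`
and `g : V → ℝ` is infinitely differentiable, bounded and Lipschitz. -/
def IsCylindrical {B : Type*} [NormedAddCommGroup B] [NormedSpace ℝ B] (f : B → ℝ) : Prop :=
  ∃ (V : Type) (_ : NormedAddCommGroup V) (_ : NormedSpace ℝ V),
    FiniteDimensional ℝ V ∧ ∃ (p : B →L[ℝ] V) (g : V → ℝ),
      ContDiff ℝ (⊤ : ℕ∞) g ∧ (∃ C, ∀ v, |g v| ≤ C) ∧ (∃ K, LipschitzWith K g) ∧ f = g ∘ p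

open scoped NNReal Convolution Topology

lemma lipOn_le_iff {X : Type*} [MetricSpace X] (f : X → ℝ) (S : Set X) (C : ℝ≥0) :
    lipOn f S ≤ C ↔ LipschitzOnWith C f S := by
  unfold lipOn
  constructor
  · intro h x hx y hy
    have h1 : edist (f x) (f y) / edist x y ≤ C :=
      le_trans (le_iSup₂_of_le (⟨x, hx⟩ : S) (⟨y, hy⟩ : S) le_rfl) h
    by_cases hxy : x = y
    · subst hxy; simp
    · exact (ENNReal.div_le_iff (by simpa using hxy) (edist_ne_top _ _)).1 h1
  · intro h
    refine iSup₂_le fun x y => ?_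
    exact ENNReal.div_le_of_le_mul (h x.2 y.2)

lemma mollify {V : Type} [NormedAddCommGroup V] [NormedSpace ℝ V] [FiniteDimensional ℝ V]
    (g : V → ℝ) (K : ℝ≥0) (hg : LipschitzWith K g) (m M : ℝ) (hm : ∀ v, m ≤ g v ∧ g v ≤ M)
    (τ : ℝ) (hτ : 0 < τ) :
    ∃ G : V → ℝ, ContDiff ℝ (⊤ : ℕ∞) G ∧ LipschitzWith K G ∧ (∀ v, m ≤ G v ∧ G v ≤ M) ∧
      (∀ v, |G v - g v| ≤ K * τ) ∧
      (∀ v, ∀ C : ℝ≥0, LipschitzOnWith C g (ball v (2 * τ)) → LipschitzOnWith C G (ball v τ)) := by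
  letI : MeasurableSpace V := borel V
  haveI : BorelSpace V := ⟨rfl⟩
  let μ : Measure V := Measure.addHaar
  let φ : ContDiffBump (0 : V) := ⟨τ / 2, τ, by positivity, by linarith⟩
  have hint : ∀ h : V → ℝ, Continuous h → Integrable (fun t => φ.normed μ t * h t) μ := by
    intro h hh
    exact (φ.continuous_normed.mul hh).integrable_of_hasCompactSupport
      (φ.hasCompactSupport_normed.mul_right)
  have hsupp : ∀ t, φ.normed μ t ≠ 0 → ‖t‖ < τ := by
    intro t ht
    have : t ∈ Function.support (φ.normed μ) := ht
    rw [φ.support_normed_eq] at this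
    simpa [φ] using this
  have hG : ∀ v, (φ.normed μ ⋆[ContinuousLinearMap.lsmul ℝ ℝ, μ] g) v
      = ∫ t, φ.normed μ t * g (v - t) ∂μ := by
    intro v
    simp [convolution, smul_eq_mul]
  have hint1 : ∀ v, Integrable (fun t => φ.normed μ t * g (v - t)) μ := fun v =>
    hint _ (hg.continuous.comp (by fun_prop))
  have hone : ∫ t, φ.normed μ t ∂μ = 1 := φ.integral_normed
  have hintφ : Integrable (φ.normed μ) μ := φ.integrable_normed
  -- comparison
  have hcmp : ∀ (a b : V → ℝ), Continuous a → Continuous b → ∀ c : ℝ,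
      (∀ t, ‖t‖ < τ → a t ≤ b t + c) →
      ∫ t, φ.normed μ t * a t ∂μ ≤ ∫ t, φ.normed μ t * b t ∂μ + c := by
    intro a b ha hb c hab
    have : ∫ t, φ.normed μ t * b t ∂μ + c = ∫ t, (φ.normed μ t * b t + φ.normed μ t * c) ∂μ := by
      rw [integral_add (hint b hb) (hintφ.mul_const c), integral_mul_const, hone, one_mul]
    rw [this]
    refine integral_mono (hint a ha) ((hint b hb).add (hintφ.mul_const c)) fun t => ?_
    show φ.normed μ t * a t ≤ φ.normed μ t * b t + φ.normed μ t * c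
    by_cases ht : φ.normed μ t = 0
    · simp [ht]
    · rw [← mul_add]
      exact mul_le_mul_of_nonneg_left (hab t (hsupp t ht)) (φ.nonneg_normed t)
  have hconst : ∀ c : ℝ, ∫ t, φ.normed μ t * c ∂μ = c := by
    intro c; rw [integral_mul_const, hone, one_mul]
  have hcont : ∀ v, Continuous fun t => g (v - t) := fun v => hg.continuous.comp (by fun_prop)
  refine ⟨fun v => ∫ t, φ.normed μ t * g (v - t) ∂μ, ?_, ?_, ?_, ?_, ?_⟩
  · have := HasCompactSupport.contDiff_convolution_left (n := (⊤ : ℕ∞)) (μ := μ) (f := φ.normed μ) (g := g)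
      (ContinuousLinearMap.lsmul ℝ ℝ) φ.hasCompactSupport_normed φ.contDiff_normed
      hg.continuous.locallyIntegrable
    convert this using 1
    ext v; rw [hG]
  · refine LipschitzWith.of_le_add_mul K fun x y => ?_
    refine hcmp _ _ (hcont x) (hcont y) _ fun t _ => ?_
    have := hg.le_add_mul (x - t) (y - t)
    simpa using this
  · intro v
    constructor
    · have := hcmp (fun _ => m) (fun t => g (v - t)) continuous_const (hcont v) 0
        (fun t _ => by simpa using (hm _).1)
      simpa only [hconst, add_zero] using this
    · have := hcmp (fun t => g (v - t)) (fun _ => M) (hcont v) continuous_const 0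
        (fun t _ => by simpa using (hm _).2)
      simpa only [hconst, add_zero] using this
  · intro v
    have h1 := hcmp (fun t => g (v - t)) (fun _ => g v) (hcont v) continuous_const (K * τ)
        (fun t ht => by
          have := hg.le_add_mul (v - t) v
          have h2 : dist (v - t) v = ‖t‖ := by simp [dist_eq_norm]
          rw [h2] at this
          have := mul_le_mul_of_nonneg_left ht.le K.2
          simp only [NNReal.val_eq_coe] at this
          linarith)
    have h2 := hcmp (fun _ => g v) (fun t => g (v - t)) continuous_const (hcont v) (K * τ)
        (fun t ht => by
          have := hg.le_add_mul v (v - t)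
          have h2 : dist v (v - t) = ‖t‖ := by simp [dist_eq_norm]
          rw [h2] at this
          have := mul_le_mul_of_nonneg_left ht.le K.2
          simp only [NNReal.val_eq_coe] at this
          linarith)
    rw [hconst] at h1 h2
    rw [abs_le]; constructor <;> linarith
  · intro v C hC
    refine LipschitzOnWith.of_le_add_mul C fun x hx y hy => ?_
    refine hcmp _ _ (hcont x) (hcont y) _ fun t ht => ?_
    have hb : ∀ z ∈ ball v τ, z - t ∈ ball v (2 * τ) := by
      intro z hz
      rw [mem_ball, dist_eq_norm] at hz ⊢
      have : z - t - v = (z - v) - t := by abel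
      rw [this]
      have := norm_sub_le (z - v) t
      linarith
    have := hC.le_add_mul (hb x hx) (hb y hy)
    simpa using this

lemma construct {B : Type*} [NormedAddCommGroup B] [NormedSpace ℝ B]
    (f : B → ℝ) (L : ℝ≥0) (hf : LipschitzWith L f) (K : Set B) (hK : IsCompact K)
    (hne : K.Nonempty) (r : ℝ) (hr : 0 < r) (hr1 : r ≤ 1) (ε : ℝ≥0) (hε : 0 < ε) :
    ∃ (k : ℕ) (p : B →L[ℝ] (Fin k × Fin k → ℝ)) (g : (Fin k × Fin k → ℝ) → ℝ) (τ : ℝ), 0 < τ ∧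
      (∀ x, ‖p x‖ ≤ ‖x‖) ∧ LipschitzWith (L + ε) g ∧ (∀ x ∈ K, |g (p x) - f x| ≤ ε) ∧
      (∀ x ∈ K, ∀ C : ℝ≥0, LipschitzOnWith C f (ball x (2 * r)) →
        LipschitzOnWith (C + ε) g (ball (p x) τ)) := by
  have hε' : (0 : ℝ) < ε := hε
  have hL0 : (0 : ℝ) ≤ L := L.2
  set δ : ℝ := ε * r / (32 * (L + ε)) with hδ
  have hδ0 : 0 < δ := by positivity
  have hδe : (L + ε) * δ = ε * r / 32 := by
    rw [hδ]; field_simp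
  have hδr : δ ≤ r / 32 := by
    have : 0 ≤ L * δ := by positivity
    have h2 : ε * δ ≤ ε * (r / 32) := by linarith
    exact le_of_mul_le_mul_left h2 hε'
  obtain ⟨S, hSK, hSf, hcov⟩ := hK.finite_cover_balls hδ0
  haveI := hSf.fintype
  have e := (Fintype.equivFin S).symm
  set k := Fintype.card S
  let y : Fin k → B := fun i => (e i : B)
  have hnet : ∀ x ∈ K, ∃ i, ‖x - y i‖ < δ := by
    intro x hx
    have := hcov hx
    simp only [mem_iUnion, mem_ball, dist_eq_norm] at this
    obtain ⟨s, hs, h⟩ := this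
    exact ⟨e.symm ⟨s, hs⟩, by simpa [y] using h⟩
  have hyK : ∀ i, y i ∈ K := fun i => hSK (e i).2
  haveI : Nonempty (Fin k) := by
    obtain ⟨x, hx⟩ := hne
    exact ⟨(hnet x hx).choose⟩
  choose q hq1 hq2 using fun ij : Fin k × Fin k => exists_dual_vector'' ℝ (y ij.1 - y ij.2)
  let p : B →L[ℝ] (Fin k × Fin k → ℝ) := ContinuousLinearMap.pi q
  have hp : ∀ x, ‖p x‖ ≤ ‖x‖ := by
    intro x
    refine (pi_norm_le_iff_of_nonneg (norm_nonneg x)).2 fun ij => ?_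
    exact (q ij).le_of_opNorm_le_of_le (hq1 ij) le_rfl |>.trans (by simp)
  have hpn : ∀ x ∈ K, ∀ i, ‖x - y i‖ ≤ ‖p x - p (y i)‖ + 2 * δ := by
    intro x hx i
    obtain ⟨j, hj⟩ := hnet x hx
    have h1 : ‖y j - y i‖ ≤ ‖p (y j - y i)‖ := by
      have := norm_le_pi_norm (p (y j - y i)) (j, i)
      have h2 : p (y j - y i) (j, i) = ‖y j - y i‖ := by
        simpa [p] using hq2 (j, i)
      rw [h2] at this
      simpa using this
    have h2 : p (y j - y i) = (p x - p (y i)) - p (x - y j) := by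
      simp only [map_sub]; abel
    have h3 := norm_sub_le (p x - p (y i)) (p (x - y j))
    have h4 := hp (x - y j)
    have h5 : x - y i = (x - y j) + (y j - y i) := by abel
    have h6 := norm_add_le (x - y j) (y j - y i)
    rw [← h5] at h6
    rw [h2] at h1
    linarith
  -- local slopes
  let a : Fin k → ℝ≥0 := fun i => (lipOn f (ball (y i) r)).toNNReal
  have hfin : ∀ i, lipOn f (ball (y i) r) ≤ L := fun i => (lipOn_le_iff _ _ _).2 hf.lipschitzOnWith
  have hacoe : ∀ i, (a i : ℝ≥0∞) = lipOn f (ball (y i) r) := fun i =>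
    ENNReal.coe_toNNReal (ne_top_of_le_ne_top ENNReal.coe_ne_top (hfin i))
  have haL : ∀ i, (a i : ℝ) ≤ L := by
    intro i
    have := hfin i
    rw [← hacoe] at this
    exact_mod_cast this
  have haLip : ∀ i, LipschitzOnWith (a i) f (ball (y i) r) := fun i =>
    (lipOn_le_iff _ _ _).1 (hacoe i).ge
  have haC : ∀ i, ∀ C : ℝ≥0, LipschitzOnWith C f (ball (y i) r) → (a i : ℝ) ≤ C := by
    intro i C hC
    have := (lipOn_le_iff _ _ _).2 hC
    rw [← hacoe] at this
    exact_mod_cast this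
  let θ : Fin k → ℝ → ℝ := fun i s => max (a i * s) (L * s - (L - a i) * (r / 2))
  have hθ : ∀ i s s' t, 0 ≤ t → s' ≤ s + t → θ i s' ≤ θ i s + L * t := by
    intro i s s' t ht hs
    have h0 : (0 : ℝ) ≤ a i := (a i).2
    refine max_le ?_ ?_
    · have h1 := le_max_left (a i * s) (L * s - (L - a i) * (r / 2))
      have h2 := mul_le_mul_of_nonneg_left hs h0
      have h3 := mul_le_mul_of_nonneg_right (haL i) ht
      simp only [θ]; linarith
    · have h1 := le_max_right (a i * s) (L * s - (L - a i) * (r / 2))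
      have h2 := mul_le_mul_of_nonneg_left hs hL0
      simp only [θ]; linarith
  have hθs : ∀ i s, s ≤ r / 2 → θ i s = a i * s := by
    intro i s hs
    refine max_eq_left ?_
    have := mul_le_mul_of_nonneg_left hs (sub_nonneg.2 (haL i))
    linarith
  have hfθ : ∀ i x, f x - f (y i) ≤ θ i ‖x - y i‖ := by
    intro i x
    by_cases hd : ‖x - y i‖ < r
    · refine le_trans ?_ (le_max_left _ _)
      have := (haLip i).le_add_mul (x := x) (by simpa [dist_eq_norm] using hd) (mem_ball_self hr)
      rw [dist_eq_norm] at this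
      linarith
    · push Not at hd
      refine le_trans ?_ (le_max_right _ _)
      set d := ‖x - y i‖ with hdd
      have hd0 : 0 < d := by linarith
      set c := r / 2 / d with hc
      have hcd : c * d = r / 2 := by rw [hc]; field_simp
      have hc0 : 0 ≤ c := by positivity
      have hc1 : c ≤ 1 := by rw [hc, div_le_one hd0]; linarith
      set z := y i + c • (x - y i) with hz
      have hzy : dist z (y i) = r / 2 := by
        rw [dist_eq_norm, hz, add_sub_cancel_left, norm_smul, Real.norm_of_nonneg hc0, ← hdd, hcd]
      have hxz : dist x z = d - r / 2 := by
        have : x - z = (1 - c) • (x - y i) := by rw [hz, sub_smul, one_smul]; abel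
        rw [dist_eq_norm, this, norm_smul, Real.norm_of_nonneg (by linarith), ← hdd]
        linarith
      have h1 := (haLip i).le_add_mul (x := z) (by rw [mem_ball, hzy]; linarith) (mem_ball_self hr)
      have h2 := hf.le_add_mul x z
      rw [hzy] at h1
      rw [hxz] at h2
      linarith
  let h : Fin k → (Fin k × Fin k → ℝ) → ℝ := fun i u =>
    f (y i) + (θ i ‖u - p (y i)‖ + ε * ‖u - p (y i)‖)
  have hh : ∀ i u v, h i u ≤ h i v + (L + ε) * ‖u - v‖ := by
    intro i u v
    have h1 : ‖u - p (y i)‖ ≤ ‖v - p (y i)‖ + ‖u - v‖ := by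
      have : u - p (y i) = (v - p (y i)) + (u - v) := by abel
      rw [this]; exact norm_add_le _ _
    have h2 := hθ i _ _ _ (norm_nonneg (u - v)) h1
    have h3 := mul_le_mul_of_nonneg_left h1 hε'.le
    simp only [h]; linarith
  let g : (Fin k × Fin k → ℝ) → ℝ := fun u => Finset.univ.inf' Finset.univ_nonempty (fun i => h i u)
  have hgle : ∀ u i, g u ≤ h i u := fun u i => Finset.inf'_le _ (Finset.mem_univ i)
  have hgex : ∀ u, ∃ i, g u = h i u := fun u => by
    obtain ⟨i, -, hi⟩ := Finset.exists_mem_eq_inf' Finset.univ_nonempty (fun i => h i u)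
    exact ⟨i, hi⟩
  have hglip : ∀ u v, g u ≤ g v + (L + ε) * ‖u - v‖ := by
    intro u v
    obtain ⟨i, hi⟩ := hgex v
    rw [hi]; exact (hgle u i).trans (hh i u v)
  have hlow : ∀ x ∈ K, ∀ i, f x - 2 * L * δ + ε * ‖p x - p (y i)‖ ≤ h i (p x) := by
    intro x hx i
    have h1 := hfθ i x
    have h2 := hθ i _ _ _ (by positivity : 0 ≤ 2 * δ) (hpn x hx i)
    simp only [h]; linarith
  have hup : ∀ x ∈ K, g (p x) ≤ f x + 2 * (L + ε) * δ := by
    intro x hx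
    obtain ⟨i, hi⟩ := hnet x hx
    have h1 := hgle (p x) i
    have h2 := hh i (p x) (p (y i))
    have h3 : h i (p (y i)) = f (y i) := by
      have : θ i 0 = 0 := by rw [hθs i 0 (by positivity), mul_zero]
      simp [h, this]
    have h4 : ‖p x - p (y i)‖ ≤ δ := by
      rw [← map_sub]; exact (hp _).trans hi.le
    have h5 := mul_le_mul_of_nonneg_left h4 (by positivity : (0 : ℝ) ≤ L + ε)
    have h6 := hf.le_add_mul (y i) x
    rw [dist_comm, dist_eq_norm] at h6
    have h7 := mul_le_mul_of_nonneg_left hi.le hL0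
    have h8 : 0 ≤ ε * δ := by positivity
    linarith
  have hεδ : 0 ≤ ε * δ := by positivity
  refine ⟨k, p, g, δ, hδ0, hp, ?_, ?_, ?_⟩
  · refine LipschitzWith.of_le_add_mul _ fun u v => ?_
    rw [dist_eq_norm]; push_cast; exact hglip u v
  · intro x hx
    have h1 := hup x hx
    obtain ⟨i, hi⟩ := hgex (p x)
    have h2 := hlow x hx i
    have h3 : 0 ≤ ε * ‖p x - p (y i)‖ := by positivity
    have h4 : ε * r ≤ ε * 1 := mul_le_mul_of_nonneg_left hr1 hε'.le
    rw [abs_le]; constructor <;> linarith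
  · intro x hx C hC
    refine LipschitzOnWith.of_le_add_mul _ fun v hv u hu => ?_
    rw [mem_ball, dist_eq_norm] at hu hv
    obtain ⟨i, hi⟩ := hgex u
    have h1 := hup x hx
    have h2 := hlow x hx i
    have h3 := hglip u (p x)
    have h4 := hh i (p x) u
    rw [norm_sub_rev] at h4
    have h5 := mul_le_mul_of_nonneg_left hu.le (by positivity : (0 : ℝ) ≤ L + ε)
    have hεr : 0 ≤ ε * r := by positivity
    have h6 : ε * ‖p x - p (y i)‖ ≤ ε * (r / 4) := by linarith
    have h7 : ‖p x - p (y i)‖ ≤ r / 4 := le_of_mul_le_mul_left h6 hε'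
    have h8 := hpn x hx i
    have h9 : (a i : ℝ) ≤ C := by
      refine haC i C (hC.mono (ball_subset_ball' ?_))
      rw [dist_comm, dist_eq_norm]; linarith
    have hw : ∀ w, ‖w - p x‖ < δ → θ i ‖w - p (y i)‖ = a i * ‖w - p (y i)‖ := by
      intro w hw
      apply hθs
      have : w - p (y i) = (w - p x) + (p x - p (y i)) := by abel
      rw [this]
      have := norm_add_le (w - p x) (p x - p (y i))
      linarith
    have h10 : h i v ≤ h i u + (C + ε) * ‖v - u‖ := by
      simp only [h]
      rw [hw u hu, hw v hv]
      have h11 : ‖v - p (y i)‖ ≤ ‖u - p (y i)‖ + ‖v - u‖ := by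
        have : v - p (y i) = (u - p (y i)) + (v - u) := by abel
        rw [this]; exact norm_add_le _ _
      have h12 := mul_le_mul_of_nonneg_left h11 (by positivity : (0 : ℝ) ≤ a i + ε)
      have h13 := mul_le_mul_of_nonneg_right h9 (norm_nonneg (v - u))
      linarith
    rw [dist_eq_norm, hi]
    push_cast
    exact (hgle v i).trans h10

lemma combine {B : Type*} [NormedAddCommGroup B] [NormedSpace ℝ B]
    (f : B → ℝ) (L : ℝ≥0) (hf : LipschitzWith L f) (m M : ℝ) (hm : ∀ x, m ≤ f x ∧ f x ≤ M)
    (K : Set B) (hK : IsCompact K)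
    (hne : K.Nonempty) (r : ℝ) (hr : 0 < r) (hr1 : r ≤ 1) (ε : ℝ≥0) (hε : 0 < ε) :
    ∃ F : B → ℝ, IsCylindrical F ∧ (∀ x, m ≤ F x ∧ F x ≤ M) ∧ LipschitzWith (L + ε) F ∧
      (∀ x ∈ K, |F x - f x| ≤ 2 * ε) ∧
      (∀ x ∈ K, ∀ C : ℝ≥0, LipschitzOnWith C f (ball x (2 * r)) → ‖fderiv ℝ F x‖ ≤ C + ε) := by
  obtain ⟨k, p, g, τ, hτ, hp, hgL, hgf, hgloc⟩ := construct f L hf K hK hne r hr hr1 ε hε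
  have hε' : (0 : ℝ) < ε := hε
  have hL0 : (0 : ℝ) ≤ L := L.2
  have hmM : m ≤ M := (hm 0).1.trans (hm 0).2
  let c : ℝ → ℝ := fun s => max m (min M s)
  have hc : LipschitzWith 1 c := (LipschitzWith.id.const_min M).const_max m
  have hcf : ∀ x, c (f x) = f x := fun x => by
    simp [c, (hm x).1, (hm x).2]
  obtain ⟨τ', hτ'0, hτ'1, hτ'2⟩ : ∃ τ' : ℝ, 0 < τ' ∧ 2 * τ' ≤ τ ∧ (L + ε) * τ' ≤ ε := by
    refine ⟨min (τ / 2) (ε / (L + ε)), by positivity, ?_, ?_⟩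
    · have := min_le_left (τ / 2) (ε / (L + ε) : ℝ); linarith
    · have := min_le_right (τ / 2) (ε / (L + ε) : ℝ)
      have h2 := mul_le_mul_of_nonneg_left this (by positivity : (0 : ℝ) ≤ L + ε)
      rwa [mul_div_cancel₀ _ (by positivity)] at h2
  obtain ⟨G, hG1, hG2, hG3, hG4, hG5⟩ := mollify (c ∘ g) (L + ε)
    (by simpa using hc.comp hgL) m M
    (fun v => ⟨le_max_left _ _, max_le hmM (min_le_left _ _)⟩) τ' hτ'0
  have hp1 : LipschitzWith 1 p := by
    refine LipschitzWith.of_dist_le_mul fun x y => ?_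
    rw [dist_eq_norm, dist_eq_norm, ← map_sub]; simpa using hp (x - y)
  refine ⟨G ∘ p, ⟨_, _, _, inferInstance, p, G, hG1, ⟨max |m| |M|, fun v =>
    abs_le_max_abs_abs (hG3 v).1 (hG3 v).2⟩, ⟨_, hG2⟩, rfl⟩, fun x => hG3 _,
    by simpa using hG2.comp hp1, ?_, ?_⟩
  · intro x hx
    have h1 := hG4 (p x)
    have h2 := hc.dist_le_mul (g (p x)) (f x)
    rw [hcf, Real.dist_eq, Real.dist_eq] at h2
    have h3 := hgf x hx
    have h4 := abs_sub_le (G (p x)) (c (g (p x))) (f x)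
    simp only [Function.comp_apply] at h1 ⊢
    push_cast at h1 h2
    linarith
  · intro x hx C hC
    have h1 := hgloc x hx C hC
    have h2 : LipschitzOnWith (C + ε) (c ∘ g) (ball (p x) (2 * τ')) := by
      simpa using (hc.comp_lipschitzOnWith h1).mono (ball_subset_ball hτ'1)
    have h3 := hG5 _ _ h2
    have h4 : LipschitzOnWith (C + ε) (G ∘ p) (ball x τ') := by
      have := h3.comp (hp1.lipschitzOnWith (s := ball x τ')) (fun z hz => by
        have := hp1.dist_le_mul z x
        rw [mem_ball] at hz ⊢
        simp at this
        linarith)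
      simpa using this
    have := norm_fderiv_le_of_lipschitzOn ℝ (ball_mem_nhds x hτ'0) h4
    simpa using this

/-- **Main approximation theorem.** Given a bounded Lipschitz function `f` on a real Banach
space `B`, a σ-compact set `E ⊆ B` and `ε > 0`, there is a sequence of smooth cylindrical
functions `Fₙ` with `inf f ≤ Fₙ ≤ sup f` and `Lip(Fₙ) ≤ Lip(f) + ε`, converging to `f`
pointwise on `E` and with `limsupₙ ‖d_x Fₙ‖ ≤ lip_a(f)(x)` for every `x ∈ E`. -/
theorem approx_with_cylindrical {B : Type*} [NormedAddCommGroup B] [NormedSpace ℝ B]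
    [CompleteSpace B] (E : Set B) (hE : IsSigmaCompact E)
    (f : B → ℝ) (hLip : ∃ K, LipschitzWith K f) (hBdd : ∃ C, ∀ x, |f x| ≤ C)
    (ε : ℝ) (hε : 0 < ε) :
    ∃ F : ℕ → B → ℝ, (∀ n, IsCylindrical (F n)) ∧
      (∀ n x, sInf (Set.range f) ≤ F n x ∧ F n x ≤ sSup (Set.range f)) ∧
      (∀ n, lipOn (F n) Set.univ ≤ lipOn f Set.univ + ENNReal.ofReal ε) ∧
      (∀ x ∈ E, Tendsto (fun n => F n x) atTop (nhds (f x))) ∧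
      (∀ x ∈ E,
        Filter.limsup (fun n => ENNReal.ofReal ‖fderiv ℝ (F n) x‖) atTop ≤ asympSlope f x) := by
  obtain ⟨K₀, hK₀⟩ := hLip
  obtain ⟨C₀, hC₀⟩ := hBdd
  have hLfin : lipOn f univ ≠ ⊤ := ne_top_of_le_ne_top ENNReal.coe_ne_top
    ((lipOn_le_iff f univ K₀).2 hK₀.lipschitzOnWith)
  set L : ℝ≥0 := (lipOn f univ).toNNReal with hLdef
  have hLcoe : (L : ℝ≥0∞) = lipOn f univ := ENNReal.coe_toNNReal hLfin
  have hf : LipschitzWith L f := lipschitzOnWith_univ.1 ((lipOn_le_iff f univ L).1 hLcoe.ge)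
  have hm : ∀ x, sInf (range f) ≤ f x ∧ f x ≤ sSup (range f) := fun x =>
    ⟨csInf_le ⟨-C₀, by rintro _ ⟨z, rfl⟩; exact (abs_le.1 (hC₀ z)).1⟩ ⟨x, rfl⟩,
      le_csSup ⟨C₀, by rintro _ ⟨z, rfl⟩; exact (abs_le.1 (hC₀ z)).2⟩ ⟨x, rfl⟩⟩
  obtain ⟨K, hKc, hKE⟩ := hE
  let r : ℕ → ℝ := fun n => 1 / ((n : ℝ) + 1)
  have hr0 : ∀ n, 0 < r n := fun n => by positivity
  have hr1 : ∀ n, r n ≤ 1 := fun n => by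
    simp only [r]; rw [div_le_one (by positivity)]; linarith [(Nat.cast_nonneg n : (0 : ℝ) ≤ n)]
  have hrt : Tendsto r atTop (𝓝 0) := tendsto_one_div_add_atTop_nhds_zero_nat
  let e : ℕ → ℝ≥0 := fun n => Real.toNNReal (min ε (r n))
  have he : ∀ n, (e n : ℝ) = min ε (r n) := fun n => Real.coe_toNNReal _ (le_min hε.le (hr0 n).le)
  have he0 : ∀ n, 0 < e n := fun n => Real.toNNReal_pos.2 (lt_min hε (hr0 n))
  choose F hF1 hF2 hF3 hF4 hF5 using fun n : ℕ => combine f L hf _ _ hm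
    (insert 0 (accumulate K n)) ((isCompact_accumulate hKc n).insert 0)
    (insert_nonempty _ _) (r n) (hr0 n) (hr1 n) (e n) (he0 n)
  have hev : ∀ x ∈ E, ∀ᶠ n in atTop, x ∈ insert 0 (accumulate K n) := by
    intro x hx
    rw [← hKE, mem_iUnion] at hx
    obtain ⟨i, hi⟩ := hx
    filter_upwards [eventually_ge_atTop i] with n hn
    exact mem_insert_of_mem _ (mem_accumulate.2 ⟨i, hn, hi⟩)
  refine ⟨F, hF1, hF2, ?_, ?_, ?_⟩
  · intro n
    refine ((lipOn_le_iff _ _ _).2 (hF3 n).lipschitzOnWith).trans ?_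
    rw [ENNReal.coe_add, hLcoe]
    gcongr
    exact ENNReal.ofReal_le_ofReal (min_le_left _ _)
  · intro x hx
    rw [tendsto_iff_dist_tendsto_zero]
    refine squeeze_zero' (Eventually.of_forall fun _ => dist_nonneg) (g := fun n => 2 * r n) ?_
      (by simpa using hrt.const_mul 2)
    filter_upwards [hev x hx] with n hn
    have h1 := hF4 n x hn
    rw [he] at h1
    have := min_le_right ε (r n)
    rw [Real.dist_eq]; linarith
  · intro x hx
    refine le_iInf₂ fun s hs => ?_
    have hfin : lipOn f (ball x s) ≠ ⊤ := ne_top_of_le_ne_top ENNReal.coe_ne_top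
      ((lipOn_le_iff f _ K₀).2 hK₀.lipschitzOnWith)
    set C : ℝ≥0 := (lipOn f (ball x s)).toNNReal
    have hC : (C : ℝ≥0∞) = lipOn f (ball x s) := ENNReal.coe_toNNReal hfin
    have hCl : LipschitzOnWith C f (ball x s) := (lipOn_le_iff _ _ _).1 hC.ge
    have hlim : Tendsto (fun n => ENNReal.ofReal (C + r n)) atTop (𝓝 (C : ℝ≥0∞)) := by
      have := ENNReal.tendsto_ofReal (hrt.const_add (C : ℝ))
      simpa using this
    rw [← hC, ← hlim.limsup_eq]
    refine limsup_le_limsup ?_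
    filter_upwards [hev x hx, hrt.eventually (gt_mem_nhds (half_pos hs))] with n hn hn2
    refine ENNReal.ofReal_le_ofReal ?_
    have h1 := hF5 n x hn C (hCl.mono (ball_subset_ball (by linarith)))
    rw [he] at h1
    have := min_le_right ε (r n)
    linarith
end

section
/- Let B be a real Banach space and μ ≥ 0 a finite Borel measure on B concentrated on a σ-compact set. Let f : B → ℝ be a bounded Lipschitz function and ε > 0. Then there exists a sequence (f_n) of smooth cylindrical functions f_n : B → ℝ with inf_B f ≤ f_n ≤ sup_B f on B and sup_n Lip(f_n) ≤ Lip(f) + ε, such that f_n(x) → f(x) and limsup_n ‖d_x f_n‖_{B*} ≤ lip_a(f)(x) for μ-almost every x ∈ B. -/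
open Metric Set Filter ENNReal MeasureTheory

open scoped Convolution Topology

theorem aux_locconst {B : Type*} [NormedAddCommGroup B] (f : B → ℝ) (L : ℝ) (hL : 0 ≤ L)
    (hf : ∀ x y, |f x - f y| ≤ L * ‖x - y‖) (E : Set B) :
    ∃ c, 0 ≤ c ∧ c ≤ L ∧ (∀ x ∈ E, ∀ y ∈ E, |f x - f y| ≤ c * ‖x - y‖) ∧
      ∀ s, 0 ≤ s → (∀ x ∈ E, ∀ y ∈ E, |f x - f y| ≤ s * ‖x - y‖) → c ≤ s := by
  set T : Set ℝ := {s | 0 ≤ s ∧ ∀ x ∈ E, ∀ y ∈ E, |f x - f y| ≤ s * ‖x - y‖} with hT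
  have hLT : L ∈ T := ⟨hL, fun x _ y _ => hf x y⟩
  have hbd : BddBelow T := ⟨0, fun s hs => hs.1⟩
  refine ⟨sInf T, le_csInf ⟨L, hLT⟩ fun s hs => hs.1, csInf_le hbd hLT, ?_, ?_⟩
  · intro x hx y hy
    by_cases h : x = y
    · simp [h]
    have hpos : 0 < ‖x - y‖ := norm_pos_iff.2 (sub_ne_zero.2 h)
    rw [← div_le_iff₀ hpos]
    refine le_csInf ⟨L, hLT⟩ fun s hs => ?_
    rw [div_le_iff₀ hpos]
    exact hs.2 x hx y hy
  · intro s h0 hs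
    exact csInf_le hbd ⟨h0, hs⟩

theorem aux_mollify {V : Type} [NormedAddCommGroup V] [NormedSpace ℝ V] [FiniteDimensional ℝ V]
    (G : V → ℝ) (A m M : ℝ) (hA : 0 ≤ A)
    (hG : ∀ x y, |G x - G y| ≤ A * ‖x - y‖) (hm : ∀ x, m ≤ G x) (hM : ∀ x, G x ≤ M)
    (ρ : ℝ) (hρ : 0 < ρ) :
    ∃ g : V → ℝ, ContDiff ℝ (⊤ : ℕ∞) g ∧ (∀ x y, |g x - g y| ≤ A * ‖x - y‖) ∧
      (∀ x, m ≤ g x) ∧ (∀ x, g x ≤ M) ∧ (∀ x, |g x - G x| ≤ A * ρ) ∧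
      ∀ v s, (∀ u ∈ ball v (2 * ρ), ∀ w ∈ ball v (2 * ρ), |G u - G w| ≤ s * ‖u - w‖) →
        ∀ u ∈ ball v ρ, ∀ w ∈ ball v ρ, |g u - g w| ≤ s * ‖u - w‖ := by
  let _ : MeasurableSpace V := borel V
  have : BorelSpace V := ⟨rfl⟩
  let ν : Measure V := Measure.addHaar
  let φ : ContDiffBump (0 : V) := ⟨ρ / 2, ρ, by linarith, by linarith⟩
  have hGc : Continuous G := by
    have : LipschitzWith ⟨A, hA⟩ G := LipschitzWith.of_dist_le_mul fun x y => by
      rw [Real.dist_eq, dist_eq_norm]; exact hG x y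
    exact this.continuous
  let k : V → ℝ := φ.normed ν
  have hkc : Continuous k := φ.continuous_normed
  have hks : HasCompactSupport k := φ.hasCompactSupport_normed
  have hk0 : ∀ t, 0 ≤ k t := φ.nonneg_normed
  have hk1 : ∫ t, k t ∂ν = 1 := φ.integral_normed
  have hkz : ∀ t, t ∉ ball (0:V) ρ → k t = 0 := by
    intro t ht
    have := φ.support_normed_eq (μ := ν)
    by_contra h
    exact ht (this ▸ (Function.mem_support.2 h))
  have hint : ∀ H : V → ℝ, Continuous H → Integrable (fun t => k t * H t) ν := by
    intro H hH
    exact (hkc.mul hH).integrable_of_hasCompactSupport hks.mul_right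
  have hub : ∀ (H : V → ℝ) (C : ℝ), Continuous H → (∀ t ∈ ball (0:V) ρ, H t ≤ C) →
      ∫ t, k t * H t ∂ν ≤ C := by
    intro H C hH hC
    have h1 : ∫ t, k t * H t ∂ν ≤ ∫ t, k t * C ∂ν := by
      refine integral_mono (hint H hH) (hint _ continuous_const) fun t => ?_
      by_cases ht : t ∈ ball (0:V) ρ
      · exact mul_le_mul_of_nonneg_left (hC t ht) (hk0 t)
      · simp [hkz t ht]
    rwa [integral_mul_const, hk1, one_mul] at h1
  have hlb : ∀ (H : V → ℝ) (C : ℝ), Continuous H → (∀ t ∈ ball (0:V) ρ, C ≤ H t) →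
      C ≤ ∫ t, k t * H t ∂ν := by
    intro H C hH hC
    have := hub (fun t => - H t) (-C) hH.neg (fun t ht => neg_le_neg (hC t ht))
    simp only [mul_neg, integral_neg] at this
    linarith
  let g : V → ℝ := fun v => ∫ t, k t * G (v - t) ∂ν
  have hGv : ∀ v, Continuous fun t => G (v - t) := fun v => by fun_prop
  have hdiff : ∀ u w, g u - g w = ∫ t, k t * (G (u - t) - G (w - t)) ∂ν := by
    intro u w
    simp only [mul_sub]
    rw [integral_sub (hint _ (hGv u)) (hint _ (hGv w))]
  have habs : ∀ (H : V → ℝ) (C : ℝ), Continuous H → (∀ t ∈ ball (0:V) ρ, |H t| ≤ C) →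
      |∫ t, k t * H t ∂ν| ≤ C := by
    intro H C hH hC
    exact abs_le.2 ⟨hlb H _ hH fun t ht => (abs_le.1 (hC t ht)).1,
      hub H _ hH fun t ht => (abs_le.1 (hC t ht)).2⟩
  refine ⟨g, ?_, ?_, ?_, ?_, ?_, ?_⟩
  · have : ContDiff ℝ (⊤ : ℕ∞) (k ⋆[ContinuousLinearMap.lsmul ℝ ℝ, ν] G) :=
      hks.contDiff_convolution_left _ φ.contDiff_normed hGc.locallyIntegrable
    exact this
  · intro u w
    rw [hdiff]
    refine habs _ _ ((hGv u).sub (hGv w)) fun t _ => ?_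
    have := hG (u - t) (w - t)
    rwa [sub_sub_sub_cancel_right] at this
  · exact fun v => hlb _ _ (hGv v) fun t _ => hm _
  · exact fun v => hub _ _ (hGv v) fun t _ => hM _
  · intro v
    have : g v - G v = ∫ t, k t * (G (v - t) - G v) ∂ν := by
      simp only [mul_sub]
      rw [integral_sub (hint _ (hGv v)) (hint _ continuous_const), integral_mul_const, hk1, one_mul]
    rw [this]
    refine habs _ _ ((hGv v).sub continuous_const) fun t ht => ?_
    refine (hG _ _).trans (mul_le_mul_of_nonneg_left ?_ hA)
    rw [mem_ball_zero_iff] at ht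
    rw [sub_sub_cancel_left, norm_neg]
    exact ht.le
  · intro v s hs u hu w hw
    rw [hdiff]
    refine habs _ _ ((hGv u).sub (hGv w)) fun t ht => ?_
    have key : ∀ u ∈ ball v ρ, u - t ∈ ball v (2 * ρ) := by
      intro u hu
      rw [mem_ball_zero_iff] at ht
      rw [mem_ball_iff_norm] at hu ⊢
      have : u - t - v = (u - v) - t := by abel
      rw [this]
      have := norm_sub_le (u - v) t
      linarith
    have := hs (u - t) (key u hu) (w - t) (key w hw)
    rwa [sub_sub_sub_cancel_right] at this

theorem aux_net {B : Type*} [NormedAddCommGroup B] [NormedSpace ℝ B] (K : Set B)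
    (hK : IsCompact K) (η : ℝ) (hη : 0 < η) :
    ∃ (n : ℕ) (y : Fin (n + 1) → B) (p : B →L[ℝ] (Fin (n + 1) × Fin (n + 1) → ℝ)),
      (∀ x ∈ K, ∃ i, ‖x - y i‖ < η) ∧ (∀ x, ‖p x‖ ≤ ‖x‖) ∧
      ∀ i j, ‖y i - y j‖ ≤ ‖p (y i - y j)‖ := by
  obtain ⟨t, -, htf, ht⟩ := hK.finite_cover_balls hη
  obtain ⟨n, e, he⟩ := htf.fin_embedding
  let y : Fin (n + 1) → B := Fin.cons 0 e
  choose l hl1 hl2 using fun x : B => exists_dual_vector'' ℝ x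
  refine ⟨n, y, ContinuousLinearMap.pi fun ij => l (y ij.1 - y ij.2), ?_, ?_, ?_⟩
  · intro x hx
    have := ht hx
    simp only [mem_iUnion] at this
    obtain ⟨z, hz, hxz⟩ := this
    rw [← he] at hz
    obtain ⟨i, rfl⟩ := hz
    exact ⟨i.succ, by simpa [y, ← dist_eq_norm] using hxz⟩
  · intro x
    rw [pi_norm_le_iff_of_nonneg (norm_nonneg _)]
    intro ij
    exact (ContinuousLinearMap.le_of_opNorm_le _ (hl1 _) x).trans (by simp)
  · intro i j
    refine le_trans ?_ (norm_le_pi_norm _ (i, j))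
    simp [hl2]

theorem aux_main {B : Type*} [NormedAddCommGroup B] [NormedSpace ℝ B]
    (f : B → ℝ) (L m M : ℝ) (hL : 0 ≤ L) (hf : ∀ x y, |f x - f y| ≤ L * ‖x - y‖)
    (hm : ∀ x, m ≤ f x) (hM : ∀ x, f x ≤ M) (K : Set B) (hK : IsCompact K)
    (ε : ℝ) (hε : 0 < ε) (δ : ℝ) (hδ : 0 < δ) (hδε : δ ≤ ε / 2) (hδ1 : δ ≤ 1) :
    ∃ F : B → ℝ, IsCylindrical F ∧ (∀ x, m ≤ F x ∧ F x ≤ M) ∧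
      (∀ x y, |F x - F y| ≤ (L + ε) * ‖x - y‖) ∧ (∀ x ∈ K, |F x - f x| ≤ δ) ∧
      ∀ x ∈ K, ∀ s, 0 ≤ s →
        (∀ y ∈ ball x δ, ∀ z ∈ ball x δ, |f y - f z| ≤ s * ‖y - z‖) →
        ‖fderiv ℝ F x‖ ≤ s + δ := by
  obtain ⟨A, hAdef⟩ : ∃ A, A = L + ε := ⟨_, rfl⟩
  have hA : 0 < A := by linarith
  obtain ⟨R, hR⟩ : ∃ R, R = δ / 2 := ⟨_, rfl⟩
  have hR0 : 0 < R := by linarith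
  obtain ⟨r, hr⟩ : ∃ r, r = ε * R / (2 * A) := ⟨_, rfl⟩
  have hr0 : 0 < r := by rw [hr]; positivity
  have hAr : A * r = ε * R / 2 := by rw [hr]; field_simp
  have hrR : r ≤ R / 2 := by
    have : A * r ≤ A * (R / 2) := by rw [hAr]; nlinarith
    exact le_of_mul_le_mul_left this hA
  obtain ⟨ρ, hρ⟩ : ∃ ρ, ρ = δ * r / (32 * A) := ⟨_, rfl⟩
  have hρ0 : 0 < ρ := by rw [hρ]; positivity
  have hAρ : A * ρ = δ * r / 32 := by rw [hρ]; field_simp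
  have hρr : ρ ≤ r / 32 := by
    have : A * ρ ≤ A * (r / 32) := by rw [hAρ]; nlinarith
    exact le_of_mul_le_mul_left this hA
  obtain ⟨n, y, p, hy, hp1, hp2⟩ := aux_net K hK ρ hρ0
  choose c hc0 hcL hcw hcm using fun j => aux_locconst f L hL hf (ball (y j) R)
  let ψ : Fin (n + 1) → ℝ → ℝ := fun j t => max ((c j + δ) * t) (A * (t - r))
  have hψA : ∀ j a b, ψ j a ≤ ψ j b + A * |a - b| := by
    intro j a b
    have h1 : a - b ≤ |a - b| := le_abs_self _
    have h2 := abs_nonneg (a - b)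
    have h3 := le_max_left ((c j + δ) * b) (A * (b - r))
    have h4 := le_max_right ((c j + δ) * b) (A * (b - r))
    have h5 : c j + δ ≤ A := by linarith [hcL j]
    have h6 : 0 ≤ c j + δ := by linarith [hc0 j]
    refine max_le ?_ ?_
    · change _ ≤ max _ _ + _
      nlinarith [mul_le_mul_of_nonneg_left h1 h6, mul_le_mul_of_nonneg_right h5 h2]
    · change _ ≤ max _ _ + _
      nlinarith [mul_le_mul_of_nonneg_left h1 hA.le]
  have hψr : ∀ j t, 0 ≤ t → t ≤ r → ψ j t = (c j + δ) * t := by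
    intro j t h0 h1
    refine max_eq_left ?_
    have h6 : 0 ≤ c j + δ := by linarith [hc0 j]
    nlinarith [mul_nonneg h6 h0]
  have hψ0 : ∀ j, ψ j 0 = 0 := fun j => by rw [hψr j 0 le_rfl hr0.le, mul_zero]
  have hψmono : ∀ j a b, a ≤ b → ψ j a ≤ ψ j b := by
    intro j a b hab
    have h6 : 0 ≤ c j + δ := by linarith [hc0 j]
    refine max_le_max ?_ ?_
    · exact mul_le_mul_of_nonneg_left hab h6
    · exact mul_le_mul_of_nonneg_left (by linarith) hA.le
  have hgap : ∀ j x, f x + δ * ‖x - y j‖ ≤ f (y j) + ψ j ‖x - y j‖ := by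
    intro j x
    by_cases hd : ‖x - y j‖ < R
    · have h1 := hcw j x (mem_ball_iff_norm.2 hd) (y j) (mem_ball_self hR0)
      have h2 : (c j + δ) * ‖x - y j‖ ≤ ψ j ‖x - y j‖ := le_max_left _ _
      have h3 := (abs_le.1 h1).2
      nlinarith
    · push Not at hd
      have h1 := (abs_le.1 (hf x (y j))).2
      have h2 : A * (‖x - y j‖ - r) ≤ ψ j ‖x - y j‖ := le_max_right _ _
      have h3 : A * (‖x - y j‖ - r) = L * ‖x - y j‖ + ε * ‖x - y j‖ - ε * R / 2 := by
        rw [mul_sub, hAr, hAdef]; ring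
      nlinarith
  let τ : Fin (n + 1) → (Fin (n + 1) × Fin (n + 1) → ℝ) → ℝ :=
    fun j v => f (y j) + ψ j ‖v - p (y j)‖
  have hτA : ∀ j u w, τ j u ≤ τ j w + A * ‖u - w‖ := by
    intro j u w
    have h1 := hψA j ‖u - p (y j)‖ ‖w - p (y j)‖
    have h2 := abs_norm_sub_norm_le (u - p (y j)) (w - p (y j))
    rw [sub_sub_sub_cancel_right] at h2
    have := mul_le_mul_of_nonneg_left h2 hA.le
    simp only [τ]
    linarith
  let G0 : (Fin (n + 1) × Fin (n + 1) → ℝ) → ℝ :=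
    fun v => Finset.univ.inf' Finset.univ_nonempty fun j => τ j v
  have hG0le : ∀ j v, G0 v ≤ τ j v := fun j v =>
    Finset.inf'_le (fun j => τ j v) (Finset.mem_univ j)
  have hG0ex : ∀ v, ∃ j, G0 v = τ j v := fun v => by
    obtain ⟨j, -, hj⟩ := Finset.exists_mem_eq_inf' Finset.univ_nonempty (fun j => τ j v)
    exact ⟨j, hj⟩
  have hG0A : ∀ u w, G0 u - G0 w ≤ A * ‖u - w‖ := by
    intro u w
    obtain ⟨j, hj⟩ := hG0ex w
    linarith [hG0le j u, hτA j u w]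
  let G : (Fin (n + 1) × Fin (n + 1) → ℝ) → ℝ := fun v => max m (min M (G0 v))
  have hcl : ∀ a b : ℝ, |max m (min M a) - max m (min M b)| ≤ |a - b| := by
    intro a b
    calc _ ≤ |min M a - min M b| := by
            have := abs_max_sub_max_le_max m (min M a) m (min M b)
            simpa using this
      _ ≤ _ := by
            have := abs_min_sub_min_le_max M a M b
            simpa using this
  have hmM : m ≤ M := (hm 0).trans (hM 0)
  have hGA : ∀ u w, |G u - G w| ≤ A * ‖u - w‖ := by
    intro u w
    refine (hcl _ _).trans (abs_le.2 ⟨?_, hG0A u w⟩)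
    have := hG0A w u
    rw [norm_sub_rev] at this
    linarith
  -- lower bound for the terms at points of K
  have hlow : ∀ x ∈ K, ∀ j, f x + δ * ‖x - y j‖ - 2 * (A * ρ) ≤ τ j (p x) := by
    intro x hx j
    obtain ⟨i, hi⟩ := hy x hx
    have h1 : ‖x - y j‖ ≤ ‖p x - p (y j)‖ + 2 * ρ := by
      have e1 := hp2 i j
      have e2 := norm_add_le (x - y i) (y i - y j)
      have e3 := norm_sub_le (p (x - y j)) (p (x - y i))
      have e4 := hp1 (x - y i)
      rw [sub_add_sub_cancel] at e2
      rw [← map_sub, show x - y j - (x - y i) = y i - y j by abel] at e3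
      rw [← map_sub]
      linarith
    have h2 := hψA j (‖p x - p (y j)‖ + 2 * ρ) ‖p x - p (y j)‖
    rw [add_sub_cancel_left, abs_of_pos (by linarith)] at h2
    have h3 := hψmono j _ _ h1
    have h4 := hgap j x
    simp only [τ]
    linarith
  have hup : ∀ x ∈ K, G0 (p x) ≤ f x + 2 * (A * ρ) := by
    intro x hx
    obtain ⟨i, hi⟩ := hy x hx
    have h1 := hG0le i (p x)
    have h2 := hψA i ‖p x - p (y i)‖ 0
    rw [hψ0, sub_zero, abs_norm, zero_add] at h2
    have h3 := hp1 (x - y i)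
    rw [map_sub] at h3
    have h4 := (abs_le.1 (hf x (y i))).1
    have h5 : A * ‖p x - p (y i)‖ ≤ A * ρ := mul_le_mul_of_nonneg_left (by linarith) hA.le
    have h6 : L * ‖x - y i‖ ≤ A * ρ :=
      mul_le_mul (by linarith) hi.le (norm_nonneg _) hA.le
    simp only [τ] at h1
    linarith
  obtain ⟨g, hgs, hgA, hgm, hgM, hgG, hgl⟩ := aux_mollify G A m M hA.le hGA
    (fun v => le_max_left _ _) (fun v => max_le hmM (min_le_left _ _)) ρ hρ0
  have hFl : ∀ u w, |g (p u) - g (p w)| ≤ A * ‖u - w‖ := by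
    intro u w
    refine (hgA _ _).trans (mul_le_mul_of_nonneg_left ?_ hA.le)
    rw [← map_sub]
    exact hp1 _
  refine ⟨g ∘ p, ⟨_, inferInstance, inferInstance, inferInstance, p, g, hgs, ⟨max |m| |M|, fun v =>
    abs_le_max_abs_abs (hgm v) (hgM v)⟩, ⟨⟨A, hA.le⟩, LipschitzWith.of_dist_le_mul fun u w => by
      rw [Real.dist_eq, dist_eq_norm]; exact hgA u w⟩, rfl⟩, fun x => ⟨hgm _, hgM _⟩, ?_, ?_, ?_⟩
  · intro u w
    rw [← hAdef]
    exact hFl u w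
  · intro x hx
    have h1 := hgG (p x)
    have h2 : |G (p x) - f x| ≤ 2 * (A * ρ) := by
      have e : f x = max m (min M (f x)) := by rw [min_eq_right (hM x), max_eq_right (hm x)]
      have h3 : |G (p x) - f x| ≤ |G0 (p x) - f x| := by
        conv_lhs => rw [e]
        exact hcl _ _
      refine h3.trans (abs_le.2 ⟨?_, by linarith [hup x hx]⟩)
      obtain ⟨j, hj⟩ := hG0ex (p x)
      have := hlow x hx j
      have := mul_nonneg hδ.le (norm_nonneg (x - y j))
      linarith
    have h3 := abs_sub_le (g (p x)) (G (p x)) (f x)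
    simp only [Function.comp]
    nlinarith
  · intro x hx s hs0 hs
    -- active indices are close to x
    have hact : ∀ v ∈ ball (p x) (2 * ρ), ∀ j, G0 v = τ j v → ‖x - y j‖ < r / 2 := by
      intro v hv j hj
      rw [mem_ball_iff_norm] at hv
      have h1 := hτA j (p x) v
      have h2 := hG0A v (p x)
      rw [norm_sub_rev] at h1
      have h3 := hlow x hx j
      have h4 := hup x hx
      have h5 : A * ‖v - p x‖ ≤ A * (2 * ρ) := mul_le_mul_of_nonneg_left hv.le hA.le
      have h6 : δ * ‖x - y j‖ ≤ 8 * (A * ρ) := by linarith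
      rw [hAρ] at h6
      have h7 : ‖x - y j‖ ≤ r / 4 := le_of_mul_le_mul_left (by linarith) hδ
      linarith
    have hloc : ∀ u ∈ ball (p x) (2 * ρ), ∀ w ∈ ball (p x) (2 * ρ),
        G0 u - G0 w ≤ (s + δ) * ‖u - w‖ := by
      intro u hu w hw
      obtain ⟨j, hj⟩ := hG0ex w
      have hd := hact w hw j hj
      have hcs : c j ≤ s := by
        refine hcm j s hs0 fun a ha b hb => ?_
        have hsub : ball (y j) R ⊆ ball x δ := by
          refine ball_subset_ball' ?_
          rw [dist_comm, dist_eq_norm]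
          linarith
        exact hs a (hsub ha) b (hsub hb)
      have hnear : ∀ v ∈ ball (p x) (2 * ρ), ‖v - p (y j)‖ ≤ r := by
        intro v hv
        rw [mem_ball_iff_norm] at hv
        have e1 := norm_add_le (v - p x) (p x - p (y j))
        rw [sub_add_sub_cancel] at e1
        have e2 := hp1 (x - y j)
        rw [map_sub] at e2
        linarith
      have h1 := hG0le j u
      rw [hj]
      simp only [τ] at h1 ⊢
      rw [hψr j _ (norm_nonneg _) (hnear u hu)] at h1
      rw [hψr j _ (norm_nonneg _) (hnear w hw)]
      have e1 := norm_add_le (u - w) (w - p (y j))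
      rw [sub_add_sub_cancel] at e1
      have h6 : 0 ≤ c j + δ := by linarith [hc0 j]
      have e2 := mul_le_mul_of_nonneg_left e1 h6
      have e3 : (c j + δ) * ‖u - w‖ ≤ (s + δ) * ‖u - w‖ :=
        mul_le_mul_of_nonneg_right (by linarith) (norm_nonneg _)
      linarith
    have hlocG : ∀ u ∈ ball (p x) (2 * ρ), ∀ w ∈ ball (p x) (2 * ρ),
        |G u - G w| ≤ (s + δ) * ‖u - w‖ := by
      intro u hu w hw
      refine (hcl _ _).trans (abs_le.2 ⟨?_, hloc u hu w hw⟩)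
      have := hloc w hw u hu
      rw [norm_sub_rev] at this
      linarith
    have hg := hgl (p x) (s + δ) hlocG
    have hsδ : 0 ≤ s + δ := by linarith
    have hlip : LipschitzOnWith ⟨s + δ, hsδ⟩ (g ∘ p) (ball x ρ) := by
      refine LipschitzOnWith.of_dist_le_mul fun u hu w hw => ?_
      have key : ∀ u ∈ ball x ρ, p u ∈ ball (p x) ρ := by
        intro u hu
        rw [mem_ball_iff_norm] at hu ⊢
        rw [← map_sub]
        exact (hp1 _).trans_lt hu
      rw [Real.dist_eq, dist_eq_norm]
      refine (hg _ (key u hu) _ (key w hw)).trans (mul_le_mul_of_nonneg_left ?_ hsδ)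
      rw [← map_sub]
      exact hp1 _
    exact norm_fderiv_le_of_lipschitzOn ℝ (ball_mem_nhds x hρ0) hlip

theorem aux_lipOn_le {X : Type*} [NormedAddCommGroup X] (f : X → ℝ) (E : Set X) (C : ℝ)
    (h : ∀ x ∈ E, ∀ y ∈ E, |f x - f y| ≤ C * ‖x - y‖) : lipOn f E ≤ ENNReal.ofReal C := by
  refine iSup_le fun x => iSup_le fun y => ?_
  by_cases hxy : (x : X) = y
  · simp [hxy]
  have hpos : 0 < ‖(x:X) - y‖ := norm_pos_iff.2 (sub_ne_zero.2 hxy)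
  rw [edist_dist, edist_dist, Real.dist_eq, dist_eq_norm, ← ENNReal.ofReal_div_of_pos hpos]
  refine ENNReal.ofReal_le_ofReal ?_
  rw [div_le_iff₀ hpos]
  exact h x x.2 y y.2

theorem aux_le_lipOn {X : Type*} [NormedAddCommGroup X] (f : X → ℝ) (E : Set X)
    (hE : lipOn f E ≠ ⊤) : ∀ x ∈ E, ∀ y ∈ E, |f x - f y| ≤ (lipOn f E).toReal * ‖x - y‖ := by
  intro x hx y hy
  by_cases hxy : x = y
  · simp [hxy]
  have hpos : 0 < ‖x - y‖ := norm_pos_iff.2 (sub_ne_zero.2 hxy)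
  have h1 : edist (f x) (f y) / edist x y ≤ lipOn f E :=
    le_iSup₂_of_le (f := fun (x : E) (y : E) => edist (f x) (f y) / edist (x : X) (y : X))
      ⟨x, hx⟩ ⟨y, hy⟩ le_rfl
  rw [edist_dist, edist_dist, Real.dist_eq, dist_eq_norm, ← ENNReal.ofReal_div_of_pos hpos] at h1
  have h2 := (ENNReal.ofReal_le_iff_le_toReal hE).1 h1
  rwa [div_le_iff₀ hpos] at h2

theorem aux_lipOn_mono {X : Type*} [NormedAddCommGroup X] (f : X → ℝ) {E E' : Set X}
    (h : E ⊆ E') : lipOn f E ≤ lipOn f E' := by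
  refine iSup_le fun x => iSup_le fun y => ?_
  exact le_iSup₂_of_le (f := fun (x : E') (y : E') => edist (f x) (f y) / edist (x : X) (y : X))
      ⟨x, h x.2⟩ ⟨y, h y.2⟩ le_rfl

/-- Almost-everywhere version of the approximation theorem: if `μ` is a finite Borel measure
on a real Banach space `B` concentrated on a σ-compact set, and `f` is bounded Lipschitz,
then for every `ε > 0` there are smooth cylindrical `Fₙ` with `inf f ≤ Fₙ ≤ sup f`,
`Lip(Fₙ) ≤ Lip(f) + ε`, converging to `f` and with `limsupₙ ‖d_x Fₙ‖ ≤ lip_a(f)(x)`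
at `μ`-a.e. point. -/
theorem approx_with_cylindrical_ae {B : Type*} [NormedAddCommGroup B] [NormedSpace ℝ B]
    [CompleteSpace B] [MeasurableSpace B] [BorelSpace B]
    (μ : Measure B) [IsFiniteMeasure μ]
    (hconc : ∃ S : Set B, IsSigmaCompact S ∧ μ Sᶜ = 0)
    (f : B → ℝ) (hLip : ∃ K, LipschitzWith K f) (hBdd : ∃ C, ∀ x, |f x| ≤ C)
    (ε : ℝ) (hε : 0 < ε) :
    ∃ F : ℕ → B → ℝ, (∀ n, IsCylindrical (F n)) ∧
      (∀ n x, sInf (Set.range f) ≤ F n x ∧ F n x ≤ sSup (Set.range f)) ∧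
      (∀ n, lipOn (F n) Set.univ ≤ lipOn f Set.univ + ENNReal.ofReal ε) ∧
      ∀ᵐ x ∂μ, Tendsto (fun n => F n x) atTop (nhds (f x)) ∧
        Filter.limsup (fun n => ENNReal.ofReal ‖fderiv ℝ (F n) x‖) atTop ≤ asympSlope f x := by
  obtain ⟨S, ⟨K, hK, rfl⟩, hS⟩ := hconc
  obtain ⟨K0, hK0⟩ := hLip
  obtain ⟨C, hC⟩ := hBdd
  have hfin : lipOn f univ ≠ ⊤ := by
    refine ne_top_of_le_ne_top ENNReal.ofReal_ne_top (aux_lipOn_le f univ K0 fun x _ y _ => ?_)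
    have := hK0.dist_le_mul x y
    rwa [Real.dist_eq, dist_eq_norm] at this
  have hfinE : ∀ E, lipOn f E ≠ ⊤ := fun E =>
    ne_top_of_le_ne_top hfin (aux_lipOn_mono f (subset_univ E))
  have hL := fun x y => aux_le_lipOn f univ hfin x (mem_univ x) y (mem_univ y)
  have hbb : BddBelow (range f) := ⟨-C, by rintro _ ⟨x, rfl⟩; exact (abs_le.1 (hC x)).1⟩
  have hba : BddAbove (range f) := ⟨C, by rintro _ ⟨x, rfl⟩; exact (abs_le.1 (hC x)).2⟩
  let δ : ℕ → ℝ := fun n => min (ε / 2) (1 / ((n : ℝ) + 1))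
  have hδ0 : ∀ n, 0 < δ n := fun n => lt_min (by linarith) (by positivity)
  have hδ1 : ∀ n, δ n ≤ 1 := fun n => (min_le_right _ _).trans (by
    rw [div_le_one (by positivity)]; linarith [Nat.cast_nonneg (α := ℝ) n])
  have hδt : Tendsto δ atTop (𝓝 0) :=
    squeeze_zero (fun n => (hδ0 n).le) (fun n => min_le_right _ _)
      tendsto_one_div_add_atTop_nhds_zero_nat
  have hKc : ∀ n, IsCompact (⋃ i ∈ Finset.range (n + 1), K i) := fun n =>
    (Finset.range (n + 1)).isCompact_biUnion fun i _ => hK i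
  choose F hF1 hF2 hF3 hF4 hF5 using fun n => aux_main f (lipOn f univ).toReal
    (sInf (range f)) (sSup (range f)) ENNReal.toReal_nonneg hL
    (fun x => csInf_le hbb ⟨x, rfl⟩) (fun x => le_csSup hba ⟨x, rfl⟩)
    _ (hKc n) ε hε (δ n) (hδ0 n) (min_le_left _ _) (hδ1 n)
  refine ⟨F, hF1, hF2, fun n => ?_, ?_⟩
  · refine (aux_lipOn_le (F n) univ _ fun x _ y _ => hF3 n x y).trans ?_
    rw [ENNReal.ofReal_add ENNReal.toReal_nonneg hε.le, ENNReal.ofReal_toReal hfin]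
  have hae : ∀ᵐ x ∂μ, x ∈ ⋃ i, K i := hS
  filter_upwards [hae] with x hx
  obtain ⟨i, hi⟩ := mem_iUnion.1 hx
  have hmem : ∀ n, i ≤ n → x ∈ ⋃ i ∈ Finset.range (n + 1), K i := by
    intro n hn
    simp only [mem_iUnion]
    exact ⟨i, Finset.mem_range.2 (by omega), hi⟩
  constructor
  · rw [tendsto_iff_dist_tendsto_zero]
    refine squeeze_zero' (Eventually.of_forall fun n => dist_nonneg) ?_ hδt
    filter_upwards [eventually_ge_atTop i] with n hn
    rw [Real.dist_eq]
    exact hF4 n x (hmem n hn)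
  · refine le_iInf₂ fun r hr => ?_
    have ht : Tendsto (fun n => lipOn f (ball x r) + ENNReal.ofReal (δ n)) atTop
        (𝓝 (lipOn f (ball x r))) := by
      have h1 : Tendsto (fun n => ENNReal.ofReal (δ n)) atTop (𝓝 0) := by
        simpa using ENNReal.tendsto_ofReal hδt
      simpa using tendsto_const_nhds.add h1
    rw [← ht.limsup_eq]
    refine limsup_le_limsup ?_
    filter_upwards [eventually_ge_atTop i, hδt.eventually_lt_const hr] with n hn hnr
    have h1 := hF5 n x (hmem n hn) (lipOn f (ball x r)).toReal ENNReal.toReal_nonneg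
      fun y hy z hz => aux_le_lipOn f (ball x r) (hfinE _) y (ball_subset_ball hnr.le hy) z
        (ball_subset_ball hnr.le hz)
    refine (ENNReal.ofReal_le_ofReal h1).trans ?_
    rw [ENNReal.ofReal_add ENNReal.toReal_nonneg (hδ0 n).le, ENNReal.ofReal_toReal (hfinE _)]
end
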